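/- Assume α > 1, both λ and β are nondecreasing on [t₀,∞), b(t) > β'(t) + β(t)/t (equivalently w(t) > 0) for every t ≥ t₀, and there exists ε ∈ (0, α−1) such that (α−3)·w(t) − t·w'(t) ≥ ε·b(t) for every t ≥ t₀. Then for every z ∈ argmin Φ, ∫_{t₀}^{∞} t·w(t)·⟨∇Φ_{λ(t)}(x(t)), x(t) − z⟩ dt < +∞. -/

import Mathlib

open Set MeasureTheory Filter Real

noncomputable section

/-- Convexity for extended-real-valued functions. -/
def EConvexOn {H : Type*} [NormedAddCommGroup H] [NormedSpace ℝ H] (f : H → EReal) : Prop :=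
  ∀ x y : H, ∀ a c : ℝ, 0 ≤ a → 0 ≤ c → a + c = 1 →
    f (a • x + c • y) ≤ (a : EReal) * f x + (c : EReal) * f y

/-- `p` is the proximal point of `f` with parameter `l` at `x`, i.e. the (unique) minimizer of
`y ↦ f y + ‖x - y‖² / (2l)`. -/
def IsProxPt {H : Type*} [NormedAddCommGroup H] [InnerProductSpace ℝ H]
    (f : H → EReal) (l : ℝ) (x p : H) : Prop :=
  ∀ y : H, f p + ((‖x - p‖ ^ 2 / (2 * l) : ℝ) : EReal)
      ≤ f y + ((‖x - y‖ ^ 2 / (2 * l) : ℝ) : EReal)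

/-- The Moreau envelope of `f` with parameter `l` (as a real number). -/
def moreau {H : Type*} [NormedAddCommGroup H] [InnerProductSpace ℝ H]
    (f : H → EReal) (l : ℝ) (x : H) : ℝ :=
  (⨅ y : H, f y + ((‖x - y‖ ^ 2 / (2 * l) : ℝ) : EReal)).toReal

section Prox

variable {H : Type*} [NormedAddCommGroup H] [InnerProductSpace ℝ H]
  {f : H → EReal} {l : ℝ} {x p y z : H}

theorem IsProxPt.ne_top (hp : IsProxPt f l x p) (hy : f y ≠ ⊤) : f p ≠ ⊤ := by
  intro h
  have := hp y
  rw [h, EReal.top_add_coe, top_le_iff] at this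
  exact (EReal.add_lt_top hy (EReal.coe_ne_top _)).ne this

theorem IsProxPt.toReal_add_le (hbot : ∀ u, f u ≠ ⊥) (hp : IsProxPt f l x p) (hy : f y ≠ ⊤) :
    (f p).toReal + ‖x - p‖ ^ 2 / (2 * l) ≤ (f y).toReal + ‖x - y‖ ^ 2 / (2 * l) := by
  have h := hp y
  rw [← EReal.coe_toReal hy (hbot y), ← EReal.coe_toReal (hp.ne_top hy) (hbot p)] at h
  exact_mod_cast h

/-- The residual `(x - p) / l` at a proximal point `p` is a subgradient of `f` at `p`. -/
theorem IsProxPt.inner_le_sub (hbot : ∀ u, f u ≠ ⊥) (hconv : EConvexOn f) (hl : 0 < l)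
    (hp : IsProxPt f l x p) (hz : f z ≠ ⊤) :
    inner ℝ (l⁻¹ • (x - p)) (z - p) ≤ (f z).toReal - (f p).toReal := by
  have hpt := hp.ne_top hz
  have key : ∀ θ ∈ Ioo (0 : ℝ) 1, inner ℝ (l⁻¹ • (x - p)) (z - p) - θ * (‖z - p‖ ^ 2 / (2 * l))
      ≤ (f z).toReal - (f p).toReal := by
    rintro θ ⟨h0, h1⟩
    have hc := hconv p z (1 - θ) θ (by linarith) h0.le (by ring)
    rw [← EReal.coe_toReal hz (hbot z), ← EReal.coe_toReal hpt (hbot p), ← EReal.coe_mul,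
      ← EReal.coe_mul, ← EReal.coe_add] at hc
    have hyt : f ((1 - θ) • p + θ • z) ≠ ⊤ := (hc.trans_lt (EReal.coe_lt_top _)).ne
    rw [← EReal.coe_toReal hyt (hbot _), EReal.coe_le_coe_iff] at hc
    have hm := hp.toReal_add_le hbot hyt
    have hx : x - ((1 - θ) • p + θ • z) = (x - p) - θ • (z - p) := by module
    rw [hx, norm_sub_sq_real (x - p), real_inner_smul_right, norm_smul, Real.norm_eq_abs,
      mul_pow, sq_abs] at hm
    rw [real_inner_smul_left]
    set A := inner ℝ (x - p) (z - p)
    have he : (‖x - p‖ ^ 2 - 2 * (θ * A) + θ ^ 2 * ‖z - p‖ ^ 2) / (2 * l)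
        = ‖x - p‖ ^ 2 / (2 * l) - θ * (l⁻¹ * A) + θ ^ 2 * (‖z - p‖ ^ 2 / (2 * l)) := by
      field_simp
    rw [he] at hm
    refine le_of_mul_le_mul_left ?_ h0
    nlinarith
  have hlim : Tendsto (fun θ : ℝ => inner ℝ (l⁻¹ • (x - p)) (z - p) -
      θ * (‖z - p‖ ^ 2 / (2 * l))) (nhdsWithin 0 (Ioi 0))
      (nhds (inner ℝ (l⁻¹ • (x - p)) (z - p))) := by
    have : Continuous (fun θ : ℝ => inner ℝ (l⁻¹ • (x - p)) (z - p) -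
      θ * (‖z - p‖ ^ 2 / (2 * l))) := by fun_prop
    simpa using (this.tendsto 0).mono_left nhdsWithin_le_nhds
  refine le_of_tendsto hlim ?_
  filter_upwards [Ioo_mem_nhdsGT (zero_lt_one (α := ℝ))] with θ hθ using key θ hθ

/-- The Moreau envelope gap is controlled by the inner product of its gradient with `x - z`. -/
theorem IsProxPt.gap_le_inner (hbot : ∀ u, f u ≠ ⊥) (hconv : EConvexOn f) (hl : 0 < l)
    (hp : IsProxPt f l x p) (hz : f z ≠ ⊤) :
    (f p).toReal + ‖x - p‖ ^ 2 / (2 * l) - (f z).toReal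
      ≤ inner ℝ (l⁻¹ • (x - p)) (x - z) := by
  have h := hp.inner_le_sub hbot hconv hl hz
  have hx : x - z = (x - p) - (z - p) := by abel
  rw [hx, inner_sub_right, real_inner_smul_left _ (x - p), real_inner_self_eq_norm_sq]
  have h1 : ‖x - p‖ ^ 2 / (2 * l) ≤ l⁻¹ * ‖x - p‖ ^ 2 := by
    have : 0 ≤ ‖x - p‖ ^ 2 / (2 * l) := by positivity
    have h2 : l⁻¹ * ‖x - p‖ ^ 2 = 2 * (‖x - p‖ ^ 2 / (2 * l)) := by field_simp
    linarith
  linarith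

end Prox

/-- A function squeezed between two functions that agree to first order at a point is
differentiable there. -/
theorem HasDerivWithinAt.squeeze {f g h : ℝ → ℝ} {d a : ℝ} {s : Set ℝ}
    (hg : HasDerivWithinAt g d s a) (hh : HasDerivWithinAt h d s a)
    (hga : g a = f a) (hha : h a = f a)
    (hgf : ∀ u ∈ s, g u ≤ f u) (hfh : ∀ u ∈ s, f u ≤ h u) :
    HasDerivWithinAt f d s a := by
  rw [hasDerivWithinAt_iff_isLittleO] at *
  rw [hga] at hg
  rw [hha] at hh
  refine Asymptotics.IsBigO.trans_isLittleO ?_ (hg.norm_left.add hh.norm_left)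
  refine Asymptotics.IsBigO.of_bound 1 ?_
  filter_upwards [self_mem_nhdsWithin] with u hu
  have h1 := hgf u hu
  have h2 := hfh u hu
  simp only [smul_eq_mul, Real.norm_eq_abs, one_mul]
  refine le_trans (abs_le.2 ⟨?_, ?_⟩) (le_abs_self _)
  · linarith [neg_abs_le (g u - f a - (u - a) * d), abs_nonneg (h u - f a - (u - a) * d)]
  · linarith [le_abs_self (h u - f a - (u - a) * d), abs_nonneg (g u - f a - (u - a) * d)]

/-- Derivative of the Moreau envelope along a curve with varying parameter. -/
theorem hasDerivWithinAt_prox_value {H : Type*} [NormedAddCommGroup H] [InnerProductSpace ℝ H]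
    {f : H → EReal} (hbot : ∀ u, f u ≠ ⊥) (hproper : ∃ u, f u ≠ ⊤) {s : Set ℝ}
    {l : ℝ → ℝ} {x p : ℝ → H} {l' t : ℝ} {v p' : H} (ht : t ∈ s) (hl : 0 < l t)
    (hp : ∀ u ∈ s, IsProxPt f (l u) (x u) (p u))
    (hlt : HasDerivWithinAt l l' s t) (hx : HasDerivWithinAt x v s t)
    (hpt : HasDerivWithinAt p p' s t) :
    HasDerivWithinAt (fun u => (f (p u)).toReal + ‖x u - p u‖ ^ 2 / (2 * l u))
      (inner ℝ ((l t)⁻¹ • (x t - p t)) v - l' / 2 * ‖(l t)⁻¹ • (x t - p t)‖ ^ 2) s t := by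
  obtain ⟨y, hy⟩ := hproper
  have hfin : ∀ u ∈ s, f (p u) ≠ ⊤ := fun u hu => (hp u hu).ne_top hy
  have hl2 : HasDerivWithinAt (fun u => 2 * l u) (2 * l') s t := hlt.const_mul 2
  have hne : 2 * l t ≠ 0 := by positivity
  have hnorm : ‖(l t)⁻¹ • (x t - p t)‖ ^ 2 = ‖x t - p t‖ ^ 2 / l t ^ 2 := by
    rw [norm_smul, mul_pow, Real.norm_eq_abs, sq_abs]
    field_simp
  have hupper : HasDerivWithinAt
      (fun u => (f (p t)).toReal + ‖x u - p t‖ ^ 2 / (2 * l u))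
      (inner ℝ ((l t)⁻¹ • (x t - p t)) v - l' / 2 * ‖(l t)⁻¹ • (x t - p t)‖ ^ 2) s t := by
    refine ((((hx.sub_const (p t)).norm_sq).div hl2 hne).const_add
      (f (p t)).toReal).congr_deriv ?_
    rw [hnorm, real_inner_smul_left]
    field_simp
  have hlower : HasDerivWithinAt
      (fun u => (f (p t)).toReal + ‖x t - p t‖ ^ 2 / (2 * l t) +
        (‖x u - p u‖ ^ 2 / (2 * l u) - ‖x t - p u‖ ^ 2 / (2 * l t)))
      (inner ℝ ((l t)⁻¹ • (x t - p t)) v - l' / 2 * ‖(l t)⁻¹ • (x t - p t)‖ ^ 2) s t := by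
    refine (((((hx.sub hpt).norm_sq).div hl2 hne).sub
      (((hpt.const_sub (x t)).norm_sq).div_const (2 * l t))).const_add
      ((f (p t)).toReal + ‖x t - p t‖ ^ 2 / (2 * l t))).congr_deriv ?_
    rw [hnorm, real_inner_smul_left, inner_sub_right, inner_neg_right]
    simp only [Pi.sub_apply]
    field_simp
    ring
  refine hlower.squeeze hupper (by simp) rfl (fun u hu => ?_) (fun u hu => ?_)
  · have := (hp t ht).toReal_add_le hbot (hfin u hu)
    linarith
  · exact (hp u hu).toReal_add_le hbot (hfin t ht)

theorem MonotoneOn.nonneg_of_hasDerivAt {f : ℝ → ℝ} {a t d : ℝ} (hf : MonotoneOn f (Ici a))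
    (ht : a ≤ t) (hd : HasDerivAt f d t) : 0 ≤ d := by
  rw [← hd.hasDerivWithinAt.derivWithin (uniqueDiffOn_Ici a t ht)]
  exact hf.derivWithin_nonneg

/-- A nonnegative continuous function on `[a, ∞)` dominated by the dissipation of a nonnegative
energy has finite integral. -/
theorem lintegral_Ici_lt_top_of_le_dissipation {E E' φ : ℝ → ℝ} {a : ℝ}
    (hE : ∀ t ∈ Ici a, HasDerivWithinAt E (E' t) (Ici a) t) (hEnonneg : ∀ t ∈ Ici a, 0 ≤ E t)
    (hφ : ContinuousOn φ (Ici a)) (hφnonneg : ∀ t ∈ Ici a, 0 ≤ φ t)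
    (hle : ∀ t ∈ Ici a, E' t ≤ -φ t) :
    ∫⁻ t in Ici a, ENNReal.ofReal (φ t) < ⊤ := by
  have hint : ∀ T, IntegrableOn φ (Icc a T) := fun T =>
    (hφ.mono Icc_subset_Ici_self).integrableOn_Icc
  have hbound : ∀ T, a ≤ T → ∫ t in a..T, ‖φ t‖ ≤ E a := by
    intro T hT
    have h1 : ∫ t in a..T, ‖φ t‖ = ∫ t in a..T, φ t := by
      refine intervalIntegral.integral_congr fun t ht => ?_
      rw [uIcc_of_le hT] at ht
      exact Real.norm_of_nonneg (hφnonneg t ht.1)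
    have h2 := intervalIntegral.integral_le_sub_of_hasDeriv_right_of_le (g := fun t => -E t)
      (g' := fun t => -E' t) hT
      (fun t ht => ((hE t ht.1).neg.continuousWithinAt).mono Icc_subset_Ici_self)
      (fun t ht => (hE t ht.1.le).neg.mono fun u hu => ht.1.le.trans (le_of_lt hu)) (hint T)
      (fun t ht => le_neg_of_le_neg (hle t ht.1.le))
    rw [h1]
    linarith [hEnonneg T hT]
  have hI : IntegrableOn φ (Ioi a) :=
    integrableOn_Ioi_of_intervalIntegral_norm_bounded (l := atTop) (b := id) (E a) a
      (fun T => (hint T).mono_set Ioc_subset_Icc_self) tendsto_id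
      (by filter_upwards [eventually_ge_atTop a] with T hT using hbound T hT)
  exact Integrable.lintegral_lt_top ((integrableOn_Ici_iff_integrableOn_Ioi).2 hI)

theorem gradient_inner_integral_finite
    {H : Type*} [NormedAddCommGroup H] [InnerProductSpace ℝ H] [CompleteSpace H]
    (Φ : H → EReal)
    (hΦbot : ∀ y, Φ y ≠ ⊥) (hΦproper : ∃ y, Φ y ≠ ⊤)
    (hΦconv : EConvexOn Φ) (hΦlsc : LowerSemicontinuous Φ)
    (t₀ α : ℝ) (ht₀ : 0 < t₀)
    (β b lam β' b' lam' w' : ℝ → ℝ)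
    (hβnonneg : ∀ t ≥ t₀, 0 ≤ β t)
    (hbpos : ∀ t ≥ t₀, 0 < b t)
    (hlampos : ∀ t ≥ t₀, 0 < lam t)
    (hβ' : ∀ t ≥ t₀, HasDerivAt β (β' t) t)
    (hb' : ∀ t ≥ t₀, HasDerivAt b (b' t) t)
    (hlam' : ∀ t ≥ t₀, HasDerivAt lam (lam' t) t)
    (hw' : ∀ t ≥ t₀, HasDerivAt (fun s => b s - β' s - β s / s) (w' t) t)
    (x v acc p G' : ℝ → H)
    (hx : ∀ t ≥ t₀, HasDerivAt x (v t) t)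
    (hv : ∀ t ≥ t₀, HasDerivAt v (acc t) t)
    (hp : ∀ t ≥ t₀, IsProxPt Φ (lam t) (x t) (p t))
    (hG' : ∀ t ≥ t₀, HasDerivAt (fun s => (lam s)⁻¹ • (x s - p s)) (G' t) t)
    (hode : ∀ t ≥ t₀, acc t + (α / t) • v t + β t • G' t
        + b t • ((lam t)⁻¹ • (x t - p t)) = 0)
    (hα : 1 < α)
    (hlammono : MonotoneOn lam (Set.Ici t₀))
    (hβmono : MonotoneOn β (Set.Ici t₀))
    (hw : ∀ t ≥ t₀, β' t + β t / t < b t)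
    (hAs2 : ∃ ε, 0 < ε ∧ ε < α - 1 ∧
      ∀ t ≥ t₀, ε * b t ≤ (α - 3) * (b t - β' t - β t / t) - t * w' t)
    (z : H) (hz : ∀ y, Φ z ≤ Φ y)
    :
    ∫⁻ t in Set.Ici t₀, ENNReal.ofReal
      (t * (b t - β' t - β t / t)
        * (inner ℝ ((lam t)⁻¹ • (x t - p t)) (x t - z) : ℝ)) < ⊤ := by
  obtain ⟨ε, hε0, hεα, hε⟩ := hAs2
  have hzt : Φ z ≠ ⊤ := by
    obtain ⟨y, hy⟩ := hΦproper
    exact ((hz y).trans_lt hy.lt_top).ne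
  set w : ℝ → ℝ := fun s => b s - β' s - β s / s with hwdef
  set G : ℝ → H := fun s => (lam s)⁻¹ • (x s - p s) with hGdef
  have hpderiv : ∀ t ∈ Ici t₀, HasDerivWithinAt p
      (v t - (lam t • G' t + lam' t • G t)) (Ici t₀) t := by
    intro t ht
    refine HasDerivWithinAt.congr_of_mem
      ((hx t ht).sub ((hlam' t ht).smul (hG' t ht))).hasDerivWithinAt (fun s hs => ?_) ht
    simp [hGdef, smul_smul, mul_inv_cancel₀ (hlampos s hs).ne']
  set F : ℝ → ℝ := fun s => (Φ (p s)).toReal + ‖x s - p s‖ ^ 2 / (2 * lam s) - (Φ z).toReal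
    with hFdef
  have hF : ∀ t ∈ Ici t₀, HasDerivWithinAt F
      (inner ℝ (G t) (v t) - lam' t / 2 * ‖G t‖ ^ 2) (Ici t₀) t := fun t ht =>
    (hasDerivWithinAt_prox_value hΦbot hΦproper ht (hlampos t ht) hp
      (hlam' t ht).hasDerivWithinAt (hx t ht).hasDerivWithinAt (hpderiv t ht)).sub_const _
  have hFnonneg : ∀ t ∈ Ici t₀, 0 ≤ F t := by
    intro t ht
    have h1 : (Φ z).toReal ≤ (Φ (p t)).toReal :=
      EReal.toReal_le_toReal (hz _) (hΦbot z) ((hp t ht).ne_top hzt)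
    have h2 : 0 ≤ ‖x t - p t‖ ^ 2 / (2 * lam t) := by
      have := hlampos t ht
      positivity
    simp only [hFdef]
    linarith
  have hFinner : ∀ t ∈ Ici t₀, F t ≤ inner ℝ (G t) (x t - z) := fun t ht =>
    (hp t ht).gap_le_inner hΦbot hΦconv (hlampos t ht) hzt
  have hwpos : ∀ t ∈ Ici t₀, 0 < w t := fun t ht => by
    have := hw t ht
    simp only [hwdef]
    linarith
  have hwb : ∀ t ∈ Ici t₀, w t ≤ b t := fun t ht => by
    have h1 := hβmono.nonneg_of_hasDerivAt ht (hβ' t ht)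
    have h2 : 0 ≤ β t / t := div_nonneg (hβnonneg t ht) (ht₀.le.trans ht)
    simp only [hwdef]
    linarith
  set r : ℝ → H := fun s => (α - 1) • (x s - z) + s • (v s + β s • G s) with hrdef
  have hr : ∀ t ∈ Ici t₀, HasDerivWithinAt r (-(t * w t) • G t) (Ici t₀) t := by
    intro t ht
    have htpos : 0 < t := ht₀.trans_le ht
    have hd := (((hx t ht).sub_const z).const_smul (α - 1)).add
      ((hasDerivAt_id t).smul ((hv t ht).add ((hβ' t ht).smul (hG' t ht))))
    refine (hd.congr_deriv ?_).hasDerivWithinAt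
    have ha : acc t = -((α / t) • v t + β t • G' t + b t • G t) := by
      rw [eq_neg_iff_add_eq_zero, ← hode t ht]
      simp only [hGdef]
      abel
    simp only [ha, hwdef, id, Pi.add_apply, Pi.smul_apply']
    match_scalars <;> field_simp <;> ring
  have hE : ∀ t ∈ Ici t₀, HasDerivWithinAt
      (fun s => s ^ 2 * w s * F s + ‖r s‖ ^ 2 / 2)
      ((2 * t * w t + t ^ 2 * w' t) * F t
        + t ^ 2 * w t * (inner ℝ (G t) (v t) - lam' t / 2 * ‖G t‖ ^ 2)
        + inner ℝ (r t) (-(t * w t) • G t)) (Ici t₀) t := by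
    intro t ht
    refine ((((((hasDerivAt_id t).pow 2).mul (hw' t ht)).hasDerivWithinAt).mul (hF t ht)).add
      (((hr t ht).norm_sq).div_const 2)).congr_deriv ?_
    simp
    ring
  have hdiss : ∀ t ∈ Ici t₀, (2 * t * w t + t ^ 2 * w' t) * F t
        + t ^ 2 * w t * (inner ℝ (G t) (v t) - lam' t / 2 * ‖G t‖ ^ 2)
        + inner ℝ (r t) (-(t * w t) • G t)
      ≤ -(ε * (t * w t * inner ℝ (G t) (x t - z))) := by
    intro t ht
    have htpos : 0 < t := ht₀.trans_le ht
    have hwt := hwpos t ht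
    have hinner : inner ℝ (r t) (-(t * w t) • G t) =
        -(t * w t) * ((α - 1) * inner ℝ (G t) (x t - z)
          + t * (inner ℝ (G t) (v t) + β t * ‖G t‖ ^ 2)) := by
      simp only [hrdef]
      rw [real_inner_smul_right, real_inner_comm, inner_add_right, real_inner_smul_right,
        real_inner_smul_right, inner_add_right, real_inner_smul_right, real_inner_self_eq_norm_sq]
    rw [hinner]
    have h1 : 0 ≤ t ^ 2 * w t * (lam' t / 2 * ‖G t‖ ^ 2) := by
      have := hlammono.nonneg_of_hasDerivAt ht (hlam' t ht)
      positivity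
    have h2 : 0 ≤ t ^ 2 * w t * (β t * ‖G t‖ ^ 2) := by
      have := hβnonneg t ht
      positivity
    have h3 : t * F t * (2 * w t + t * w' t) ≤ t * F t * ((α - 1 - ε) * w t) := by
      refine mul_le_mul_of_nonneg_left ?_ (mul_nonneg htpos.le (hFnonneg t ht))
      have h4 : ε * b t ≤ (α - 3) * w t - t * w' t := hε t ht
      linarith [mul_le_mul_of_nonneg_left (hwb t ht) hε0.le]
    have h5 : t * w t * (α - 1 - ε) * F t ≤
        t * w t * (α - 1 - ε) * inner ℝ (G t) (x t - z) := by
      refine mul_le_mul_of_nonneg_left (hFinner t ht) (mul_nonneg (by positivity) ?_)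
      linarith
    linarith
  have hcont : ContinuousOn (fun t => t * w t * inner ℝ (G t) (x t - z)) (Ici t₀) :=
    fun t ht => ((continuousAt_id.mul (hw' t ht).continuousAt).mul
      ((hG' t ht).continuousAt.inner
        ((hx t ht).continuousAt.sub continuousAt_const))).continuousWithinAt
  have hnonneg : ∀ t ∈ Ici t₀, 0 ≤ t * w t * inner ℝ (G t) (x t - z) := fun t ht =>
    mul_nonneg (mul_nonneg (ht₀.le.trans ht) (hwpos t ht).le)
      ((hFnonneg t ht).trans (hFinner t ht))
  refine lintegral_Ici_lt_top_of_le_dissipation (fun t ht => (hE t ht).const_mul ε⁻¹)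
    (fun t ht => ?_) hcont hnonneg (fun t ht => ?_)
  · have := hwpos t ht
    have := hFnonneg t ht
    positivity
  · refine (mul_le_mul_of_nonneg_left (hdiss t ht) (inv_nonneg.2 hε0.le)).trans_eq ?_
    rw [mul_neg, inv_mul_cancel_left₀ hε0.ne']
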